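/- Let n ≥ 2, let 1 < p ≤ s < ∞, let α, σ > 0 satisfy 1 - n/p < α < n/p' (where p' = p/(p-1)), σ < n/s, and α + σ - 1 = n/s - n/p, and let 1 ≤ q₂ ≤ q₃ ≤ ∞. Define T f(x) = ∫_{ℝⁿ} |y|^{1-n} f(x - y) dy. Then there exists C > 0 such that ‖ |x|^{-σ} T f ‖_{s,q₃} ≤ C ‖ |x|^{α} f ‖_{p,q₂} for all measurable f : ℝⁿ → ℝ. -/

import Mathlib

open MeasureTheory Set ENNReal

/-- The distribution function `μ_f(λ) = μ{x : |f x| > λ}` of a function. -/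
noncomputable def distribFn {α : Type*} [MeasurableSpace α] (μ : Measure α)
    (f : α → ℝ) (l : ℝ≥0∞) : ℝ≥0∞ :=
  μ {x | l < ENNReal.ofReal |f x|}

/-- The decreasing rearrangement `f*(t) = inf {λ > 0 : μ_f(λ) ≤ t}`. -/
noncomputable def rearr {α : Type*} [MeasurableSpace α] (μ : Measure α)
    (f : α → ℝ) (t : ℝ) : ℝ≥0∞ :=
  sInf {l : ℝ≥0∞ | 0 < l ∧ distribFn μ f l ≤ ENNReal.ofReal t}

/-- The Lorentz `L^{p,q}` (quasi)norm
`‖f‖_{p,q} = (∫₀^∞ (t^{1/p} f*(t))^q dt/t)^{1/q}` for `q < ∞`, and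
`‖f‖_{p,∞} = sup_{t>0} t^{1/p} f*(t)`. -/
noncomputable def lorentz {α : Type*} [MeasurableSpace α] (μ : Measure α)
    (p q : ℝ≥0∞) (f : α → ℝ) : ℝ≥0∞ :=
  if q = ∞ then ⨆ t ∈ Ioi (0 : ℝ), ENNReal.ofReal t ^ p.toReal⁻¹ * rearr μ f t
  else (∫⁻ t in Ioi (0 : ℝ),
      (ENNReal.ofReal t ^ p.toReal⁻¹ * rearr μ f t) ^ q.toReal / ENNReal.ofReal t) ^ q.toReal⁻¹

/-- The potential operator `T`: convolution with the kernel `N(x) = |x|^{1-n}`. -/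
noncomputable def potl (n : ℕ) (f : EuclideanSpace ℝ (Fin n) → ℝ)
    (x : EuclideanSpace ℝ (Fin n)) : ℝ :=
  ∫ y, ‖y‖ ^ ((1 : ℝ) - (n : ℝ)) * f (x - y)


/-! The weights `‖x‖ ^ (-β)` lie in weak `L^{d/β}`, so multiplying by one of them shifts the
reciprocal of the first Lorentz exponent by `β / d`, whatever the second exponent: this is Hölder's
inequality in the form `(f g)*(s + t) ≤ f*(s) g*(t)`. Convolution with `‖x‖ ^ (γ - d)`, which lies
in weak `L^{d/(d-γ)}`, shifts it by `-γ / d`. This last claim is O'Neil's inequality: cut `f` at the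
heights `f*(2 ^ k * t)`. The kernel maps the part of `f` below `f*(t)` to a function bounded
pointwise, and the part above, which is integrable, into a weak space; adding the pieces gives
`(T f)*(t) ≤ A t ^ θ ∑ₖ min (2 ^ k) (2 ^ (k * θ)) f*(2 ^ (k - 1) * t)` with `θ = γ / d`. Dilating
`f*` by `2 ^ (k - 1)` multiplies the norm `‖t ^ a f*(t)‖_{L^q(dt/t)}` by `2 ^ (-(k - 1) * a)`, so by
Minkowski's inequality the series is bounded when `θ < a < 1`. -/

section Rearrangement

variable {X Y : Type*} [MeasurableSpace X] [MeasurableSpace Y] {μ : Measure X} {ν : Measure Y}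
  {f g : X → ℝ} {l : ℝ≥0∞} {s t : ℝ}

lemma distribFn_eq_measure_enorm : distribFn μ f l = μ {x | l < ‖f x‖ₑ} := by
  simp only [distribFn, Real.enorm_eq_ofReal_abs]

lemma distribFn_antitone : Antitone (distribFn μ f) := fun _ _ h =>
  measure_mono fun _ hx => lt_of_le_of_lt h hx

lemma rearr_antitone : Antitone (rearr μ f) := fun _ _ h =>
  sInf_le_sInf fun _ hl => ⟨hl.1, hl.2.trans (ofReal_le_ofReal h)⟩

lemma distribFn_rearr_le : distribFn μ f (rearr μ f t) ≤ ENNReal.ofReal t := by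
  obtain ⟨u, hu_anti, hu_tendsto, hu_mem⟩ :=
    exists_seq_tendsto_sInf (S := {l | 0 < l ∧ distribFn μ f l ≤ ENNReal.ofReal t})
      ⟨∞, by simp [distribFn]⟩ (OrderBot.bddBelow _)
  have h_cover : {x | rearr μ f t < ENNReal.ofReal |f x|} ⊆
      ⋃ n, {x | u n < ENNReal.ofReal |f x|} := fun x hx =>
    mem_iUnion.2 (hu_tendsto.eventually_lt_const hx).exists
  calc distribFn μ f (rearr μ f t)
      ≤ μ (⋃ n, {x | u n < ENNReal.ofReal |f x|}) := measure_mono h_cover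
    _ = ⨆ n, distribFn μ f (u n) :=
        Monotone.measure_iUnion fun _ _ h _ hx => lt_of_le_of_lt (hu_anti h) hx
    _ ≤ ENNReal.ofReal t := iSup_le fun n => (hu_mem n).2

lemma rearr_le_iff : rearr μ f t ≤ l ↔ distribFn μ f l ≤ ENNReal.ofReal t := by
  refine ⟨fun h => (distribFn_antitone h).trans distribFn_rearr_le, fun h => ?_⟩
  exact le_of_forall_gt_imp_ge_of_dense fun b hb =>
    sInf_le ⟨hb.bot_lt, (distribFn_antitone hb.le).trans h⟩

lemma rearr_mono_ae (h : ∀ᵐ x ∂μ, ‖f x‖ₑ ≤ ‖g x‖ₑ) : rearr μ f t ≤ rearr μ g t := by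
  rw [rearr_le_iff]
  refine le_trans ?_ (distribFn_rearr_le (μ := μ) (f := g) (t := t))
  simp only [distribFn_eq_measure_enorm]
  exact measure_mono_ae (h.mono fun x hx hlt => lt_of_lt_of_le hlt hx)

lemma rearr_comp_measurePreserving {φ : Y → X} (hφ : MeasurePreserving φ ν μ)
    (hf : Measurable f) : rearr ν (f ∘ φ) = rearr μ f := by
  have h_distrib : distribFn ν (f ∘ φ) = distribFn μ f := by
    funext l
    simp only [distribFn_eq_measure_enorm]
    exact hφ.measure_preimage (measurableSet_lt measurable_const hf.enorm).nullMeasurableSet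
  funext t
  simp only [rearr, h_distrib]

lemma rearr_mul_le (hs : 0 ≤ s) (ht : 0 ≤ t) :
    rearr μ (fun x => f x * g x) (s + t) ≤ rearr μ f s * rearr μ g t := by
  rw [rearr_le_iff, ofReal_add hs ht]
  have h_sub : {x | rearr μ f s * rearr μ g t < ‖f x * g x‖ₑ} ⊆
      {x | rearr μ f s < ‖f x‖ₑ} ∪ {x | rearr μ g t < ‖g x‖ₑ} := by
    intro x hx
    by_contra! hx'
    simp only [mem_union, mem_ofPred_eq, not_or, not_lt] at hx'
    exact hx.not_ge ((enorm_mul _ _).trans_le (mul_le_mul' hx'.1 hx'.2))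
  rw [distribFn_eq_measure_enorm]
  refine (measure_mono h_sub).trans ((measure_union_le _ _).trans (add_le_add ?_ ?_)) <;>
  · rw [← distribFn_eq_measure_enorm]
    exact distribFn_rearr_le

end Rearrangement

section LpNorm

variable {X : Type*} [MeasurableSpace X] {μ : Measure X}

lemma eLpNorm_tsum_le {ι : Type*} [Countable ι] {q : ℝ≥0∞} {F : ι → X → ℝ≥0∞}
    (hF : ∀ i, Measurable (F i)) (hq : 1 ≤ q) :
    eLpNorm (fun x => ∑' i, F i x) q μ ≤ ∑' i, eLpNorm (F i) q μ := by
  have h_partial (u : Finset ι) :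
      eLpNorm (fun x => ∑ i ∈ u, F i x) q μ ≤ ∑' i, eLpNorm (F i) q μ := by
    rw [← Finset.sum_fn]
    exact (eLpNorm_sum_le (fun i _ => (hF i).aestronglyMeasurable) hq).trans (ENNReal.sum_le_tsum u)
  rcases eq_or_ne q ∞ with rfl | hq_top
  · simp only [eLpNorm_exponent_top] at h_partial ⊢
    have h_ae : ∀ᵐ x ∂μ, ∀ u : Finset ι, ∑ i ∈ u, F i x ≤ ∑' i, eLpNormEssSup (F i) μ :=
      ae_all_iff.2 fun u => (enorm_ae_le_eLpNormEssSup _ μ).mono fun x hx => hx.trans (h_partial u)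
    refine essSup_le_of_ae_le _ (h_ae.mono fun x hx => ?_)
    simpa [ENNReal.tsum_eq_iSup_sum] using hx
  · have hq_pos : 0 < q.toReal := toReal_pos (one_pos.trans_le hq).ne' hq_top
    simp only [eLpNorm_eq_lintegral_rpow_enorm_toReal (one_pos.trans_le hq).ne' hq_top, one_div,
      enorm_eq_self, ENNReal.rpow_inv_le_iff hq_pos] at h_partial ⊢
    calc ∫⁻ x, (∑' i, F i x) ^ q.toReal ∂μ
        = ∫⁻ x, ⨆ u : Finset ι, (∑ i ∈ u, F i x) ^ q.toReal ∂μ := lintegral_congr fun x => by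
          rw [ENNReal.tsum_eq_iSup_sum]
          exact (orderIsoRpow q.toReal hq_pos).map_iSup _
      _ = ⨆ u : Finset ι, ∫⁻ x, (∑ i ∈ u, F i x) ^ q.toReal ∂μ :=
          lintegral_iSup_directed (fun u => by fun_prop)
            (directed_of_isDirected_le fun u v h x => by dsimp only; gcongr)
      _ ≤ _ := iSup_le h_partial

lemma eLpNorm_le_of_ae_le_mul_eLpNorm {φ : X → ℝ≥0∞} {p q c : ℝ≥0∞}
    (hφ : AEMeasurable φ μ) (hp : p ≠ 0) (hpq : p ≤ q) (hc : 1 ≤ c)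
    (h : ∀ᵐ x ∂μ, φ x ≤ c * eLpNorm φ p μ) :
    eLpNorm φ q μ ≤ c * eLpNorm φ p μ := by
  rcases eq_or_ne q ∞ with rfl | hq_top
  · exact essSup_le_of_ae_le _ h
  have hp_top : p ≠ ∞ := ne_top_of_le_ne_top hq_top hpq
  have hp_pos : 0 < p.toReal := toReal_pos hp hp_top
  have hpq' : p.toReal ≤ q.toReal := toReal_mono hq_top hpq
  set N := eLpNorm φ p μ with hN
  have hN_rpow : ∫⁻ x, φ x ^ p.toReal ∂μ = N ^ p.toReal := by
    rw [hN, eLpNorm_eq_lintegral_rpow_enorm_toReal hp hp_top, one_div,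
      ENNReal.rpow_inv_rpow hp_pos.ne']
    simp only [enorm_eq_self]
  rw [eLpNorm_eq_lintegral_rpow_enorm_toReal (hp.bot_lt.trans_le hpq).ne' hq_top, one_div,
    ENNReal.rpow_inv_le_iff (hp_pos.trans_le hpq')]
  have h_split (y : ℝ≥0∞) : y ^ q.toReal = y ^ p.toReal * y ^ (q.toReal - p.toReal) := by
    rw [← ENNReal.rpow_add_of_nonneg _ _ hp_pos.le (sub_nonneg.2 hpq'), add_sub_cancel]
  calc ∫⁻ x, φ x ^ q.toReal ∂μ
      ≤ ∫⁻ x, φ x ^ p.toReal * (c * N) ^ (q.toReal - p.toReal) ∂μ :=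
        lintegral_mono_ae (h.mono fun x hx => by
          rw [h_split]; gcongr)
    _ = N ^ p.toReal * (c * N) ^ (q.toReal - p.toReal) := by
        rw [lintegral_mul_const'' _ (hφ.pow_const _), hN_rpow]
    _ ≤ (c * N) ^ p.toReal * (c * N) ^ (q.toReal - p.toReal) := by
        gcongr; exact le_mul_of_one_le_left' hc
    _ = (c * N) ^ q.toReal := (h_split _).symm

end LpNorm

section MultiplicativeHaar

/-- The measure `dt / t` on the half-line `(0, ∞)`, extended by zero to `ℝ`: the Haar measure of
the multiplicative group of positive reals, with respect to which Lorentz norms are `Lᵖ` norms. -/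
noncomputable def mulHaar : Measure ℝ :=
  (volume.restrict (Ioi 0)).withDensity fun t => (ENNReal.ofReal t)⁻¹

lemma lintegral_mulHaar {φ : ℝ → ℝ≥0∞} (hφ : Measurable φ) :
    ∫⁻ t, φ t ∂mulHaar = ∫⁻ t in Ioi 0, φ t / ENNReal.ofReal t := by
  rw [mulHaar, lintegral_withDensity_eq_lintegral_mul _ (by fun_prop) hφ]
  simp only [Pi.mul_apply, div_eq_mul_inv, mul_comm]

lemma ae_mulHaar_pos : ∀ᵐ t ∂mulHaar, 0 < t :=
  (withDensity_absolutelyContinuous _ _).ae_le (ae_restrict_mem measurableSet_Ioi)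

lemma ofReal_one_sub_div_le_mulHaar_Ioc {a b : ℝ} (ha : 0 ≤ a) (hb : 0 < b) :
    ENNReal.ofReal (1 - a / b) ≤ mulHaar (Ioc a b) := by
  have h_restrict : (volume.restrict (Ioi 0)) (Ioc a b) = ENNReal.ofReal (b - a) := by
    rw [Measure.restrict_eq_self _ (Ioc_subset_Ioi_self.trans (Ioi_subset_Ioi ha)),
      Real.volume_Ioc]
  calc ENNReal.ofReal (1 - a / b)
      = ∫⁻ _ in Ioc a b, (ENNReal.ofReal b)⁻¹ ∂volume.restrict (Ioi 0) := by
        rw [setLIntegral_const, h_restrict, one_sub_div hb.ne', ofReal_div_of_pos hb,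
          ENNReal.div_eq_inv_mul]
    _ ≤ ∫⁻ t in Ioc a b, (ENNReal.ofReal t)⁻¹ ∂volume.restrict (Ioi 0) :=
        setLIntegral_mono' measurableSet_Ioc fun t ht =>
          ENNReal.inv_le_inv.2 (ofReal_le_ofReal ht.2)
    _ = mulHaar (Ioc a b) := (withDensity_apply _ measurableSet_Ioc).symm

lemma measurePreserving_const_mul_mulHaar {c : ℝ} (hc : 0 < c) :
    MeasurePreserving (c * ·) mulHaar mulHaar := by
  refine ⟨by fun_prop, Measure.ext_of_lintegral _ fun φ hφ => ?_⟩
  have h_preimage : (c * ·) ⁻¹' Ioi (0 : ℝ) = Ioi 0 := by ext t; simp [hc]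
  have h_density (t : ℝ) : φ (c * t) / ENNReal.ofReal t =
      ENNReal.ofReal c * (φ (c * t) / ENNReal.ofReal (c * t)) := by
    rw [ofReal_mul hc.le, ← mul_div_assoc, ENNReal.mul_div_mul_left _ _ (by simpa) ofReal_ne_top]
  rw [lintegral_map hφ (by fun_prop), lintegral_mulHaar (by fun_prop), lintegral_mulHaar hφ]
  simp only [h_density]
  rw [lintegral_const_mul _ (by fun_prop)]
  conv_rhs => rw [← Real.smul_map_volume_mul_left hc.ne', abs_of_pos hc, Measure.restrict_smul,
    lintegral_smul_measure, setLIntegral_map measurableSet_Ioi (by fun_prop) (by fun_prop),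
    h_preimage, smul_eq_mul]

end MultiplicativeHaar

/-- The norm `‖t ^ a φ(t)‖_{L^q(dt/t)}` of a function on `(0, ∞)`, which gives the Lorentz
`L^{1/a,q}` norm of a function when `φ` is its decreasing rearrangement. -/
noncomputable def powerNorm (a : ℝ) (q : ℝ≥0∞) (φ : ℝ → ℝ≥0∞) : ℝ≥0∞ :=
  eLpNorm (fun t => ENNReal.ofReal t ^ a * φ t) q mulHaar

section PowerNorm

variable {a b : ℝ} {p q : ℝ≥0∞} {φ ψ : ℝ → ℝ≥0∞}

lemma powerNorm_le_of_le_mul_rpow {c : ℝ≥0∞} (hc : c ≠ ∞)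
    (h : ∀ t, 0 < t → φ t ≤ c * ENNReal.ofReal t ^ b * ψ t) :
    powerNorm a q φ ≤ c * powerNorm (a + b) q ψ := by
  lift c to NNReal using hc
  refine eLpNorm_le_mul_eLpNorm_of_ae_le_mul' (ae_mulHaar_pos.mono fun t ht => ?_) q
  simp only [enorm_eq_self]
  calc ENNReal.ofReal t ^ a * φ t
      ≤ ENNReal.ofReal t ^ a * (c * ENNReal.ofReal t ^ b * ψ t) := by gcongr; exact h t ht
    _ = c * (ENNReal.ofReal t ^ (a + b) * ψ t) := by
        rw [ENNReal.rpow_add _ _ (by simpa) ofReal_ne_top]; ring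

lemma powerNorm_const_mul_le {c : ℝ≥0∞} (hc : c ≠ ∞) :
    powerNorm a q (fun t => c * φ t) ≤ c * powerNorm a q φ := by
  simpa using powerNorm_le_of_le_mul_rpow (a := a) (b := 0) (q := q) hc
    (φ := fun t => c * φ t) (ψ := φ) (by simp)

lemma powerNorm_comp_const_mul_le (hφ : Measurable φ) {c : ℝ} (hc : 0 < c) :
    powerNorm a q (fun t => φ (c * t)) ≤ ENNReal.ofReal c ^ (-a) * powerNorm a q φ := by
  have h_meas : Measurable fun t => ENNReal.ofReal t ^ a * φ t :=
    (ENNReal.measurable_ofReal.pow_const a).mul hφ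
  rw [powerNorm, powerNorm, ← eLpNorm_comp_measurePreserving h_meas.aestronglyMeasurable
    (measurePreserving_const_mul_mulHaar hc)]
  have hc_top : ENNReal.ofReal c ^ (-a) ≠ ∞ := by simp [hc]
  lift ENNReal.ofReal c ^ (-a) to NNReal using hc_top with k hk
  refine eLpNorm_le_mul_eLpNorm_of_ae_le_mul' (.of_forall fun t => ?_) q
  simp only [enorm_eq_self, Function.comp_apply, hk]
  rw [ofReal_mul hc.le, ENNReal.mul_rpow_of_ne_top ofReal_ne_top ofReal_ne_top, ← mul_assoc,
    ← mul_assoc, ← ENNReal.rpow_add _ _ (by simpa) ofReal_ne_top, neg_add_cancel,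
    ENNReal.rpow_zero, one_mul]

lemma powerNorm_tsum_le {ι : Type*} [Countable ι] {F : ι → ℝ → ℝ≥0∞}
    (hF : ∀ i, Measurable (F i)) (hq : 1 ≤ q) :
    powerNorm a q (fun t => ∑' i, F i t) ≤ ∑' i, powerNorm a q (F i) := by
  simp only [powerNorm, ← ENNReal.tsum_mul_left]
  exact eLpNorm_tsum_le (fun i => (ENNReal.measurable_ofReal.pow_const a).mul (hF i)) hq

lemma rpow_mul_le_powerNorm (hφ : Antitone φ) (ha : 0 ≤ a) (hq : q ≠ 0) {s t : ℝ} (hs : 0 ≤ s)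
    (hst : s < t) :
    ENNReal.ofReal s ^ a * φ t * ENNReal.ofReal (1 - s / t) ^ q.toReal⁻¹ ≤ powerNorm a q φ := by
  have ht : 0 < t := hs.trans_lt hst
  have h_meas := ofReal_one_sub_div_le_mulHaar_Ioc hs ht
  have h_pos : mulHaar (Ioc s t) ≠ 0 := ne_of_gt <| lt_of_lt_of_le
    (ofReal_pos.2 (sub_pos.2 ((div_lt_one ht).2 hst))) h_meas
  calc ENNReal.ofReal s ^ a * φ t * ENNReal.ofReal (1 - s / t) ^ q.toReal⁻¹
      ≤ ENNReal.ofReal s ^ a * φ t * mulHaar (Ioc s t) ^ q.toReal⁻¹ := by gcongr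
    _ = eLpNorm ((Ioc s t).indicator fun _ => ENNReal.ofReal s ^ a * φ t) q mulHaar := by
        rw [eLpNorm_indicator_const' measurableSet_Ioc h_pos hq, one_div, enorm_eq_self]
    _ ≤ powerNorm a q φ := eLpNorm_mono_enorm <| Set.indicator_le fun u hu =>
        mul_le_mul' (ENNReal.rpow_le_rpow (ofReal_le_ofReal hu.1.le) ha) (hφ hu.2)

lemma rpow_mul_le_powerNorm_top (hφ : Antitone φ) (ha : 0 ≤ a) {t : ℝ} (ht : 0 < t) :
    ENNReal.ofReal t ^ a * φ t ≤ powerNorm a ∞ φ := by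
  have h_lim : Filter.Tendsto (fun s => ENNReal.ofReal s ^ a * φ t) (nhdsWithin t (Iio t))
      (nhds (ENNReal.ofReal t ^ a * φ t)) := by
    refine ENNReal.Tendsto.mul_const (Filter.Tendsto.mono_left ?_ nhdsWithin_le_nhds)
      (.inl (by simp [ht.not_ge]))
    exact (ENNReal.continuous_rpow_const.comp ENNReal.continuous_ofReal).tendsto t
  refine le_of_tendsto h_lim ?_
  filter_upwards [Ioo_mem_nhdsLT ht] with s hs
  simpa using rpow_mul_le_powerNorm (q := ∞) hφ ha top_ne_zero hs.1.le hs.2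

lemma rpow_mul_le_two_rpow_mul_powerNorm (hφ : Antitone φ) (ha : 0 ≤ a) (hq : 1 ≤ q) {t : ℝ}
    (ht : 0 < t) : ENNReal.ofReal t ^ a * φ t ≤ 2 ^ (a + 1) * powerNorm a q φ := by
  have h_two : ENNReal.ofReal t = 2 * ENNReal.ofReal (t / 2) := by
    rw [← ofReal_ofNat 2, ← ofReal_mul zero_le_two, mul_div_cancel₀ t two_ne_zero]
  have h_half : ENNReal.ofReal (1 - t / 2 / t) = 2⁻¹ := by
    rw [div_right_comm, div_self ht.ne', ← ofReal_ofNat 2, ← ofReal_inv_of_pos two_pos]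
    norm_num
  have h_exp : q.toReal⁻¹ ≤ 1 := by
    rw [← toReal_inv]
    exact toReal_mono one_ne_top (ENNReal.inv_le_one.2 hq)
  calc ENNReal.ofReal t ^ a * φ t
      = 2 ^ (a + q.toReal⁻¹) * (ENNReal.ofReal (t / 2) ^ a * φ t *
          ENNReal.ofReal (1 - t / 2 / t) ^ q.toReal⁻¹) := by
        have h_cancel : (2 : ℝ≥0∞) ^ q.toReal⁻¹ * 2⁻¹ ^ q.toReal⁻¹ = 1 := by
          rw [ENNReal.inv_rpow, ENNReal.mul_inv_cancel (by simp) (by simp)]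
        rw [h_half, h_two, ENNReal.mul_rpow_of_ne_top ofNat_ne_top ofReal_ne_top,
          ENNReal.rpow_add _ _ two_ne_zero ofNat_ne_top, mul_mul_mul_comm, h_cancel, mul_one,
          mul_assoc]
    _ ≤ 2 ^ (a + 1) * powerNorm a q φ := by
        gcongr
        · exact one_le_two
        · exact rpow_mul_le_powerNorm hφ ha (one_pos.trans_le hq).ne' (half_pos ht).le
            (half_lt_self ht)

lemma powerNorm_mono_exponent (hφ : Antitone φ) (ha : 0 ≤ a) (hp : 1 ≤ p) (hpq : p ≤ q) :
    powerNorm a q φ ≤ 2 ^ (a + 1) * powerNorm a p φ :=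
  eLpNorm_le_of_ae_le_mul_eLpNorm
    ((by fun_prop : Measurable fun t => ENNReal.ofReal t ^ a).mul hφ.measurable).aemeasurable
    (one_pos.trans_le hp).ne' hpq (ENNReal.one_le_rpow one_le_two (by positivity))
    (ae_mulHaar_pos.mono fun _ ht => rpow_mul_le_two_rpow_mul_powerNorm hφ ha hp ht)

lemma lorentz_eq_powerNorm {X : Type*} [MeasurableSpace X] {μ : Measure X} {f : X → ℝ}
    (hq : q ≠ 0) : lorentz μ p q f = powerNorm p.toReal⁻¹ q (rearr μ f) := by
  have h_rearr : Measurable (rearr μ f) := rearr_antitone.measurable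
  rcases eq_or_ne q ∞ with rfl | hq_top
  · rw [lorentz, if_pos rfl]
    refine le_antisymm (iSup₂_le fun t ht => ?_) ?_
    · exact rpow_mul_le_powerNorm_top rearr_antitone (inv_nonneg.2 toReal_nonneg) ht
    · exact essSup_le_of_ae_le _ (ae_mulHaar_pos.mono fun t ht =>
        le_iSup₂ (f := fun t (_ : t ∈ Ioi (0 : ℝ)) => _ * rearr μ f t) t ht)
  · rw [lorentz, if_neg hq_top, powerNorm, eLpNorm_eq_lintegral_rpow_enorm_toReal hq hq_top,
      one_div, lintegral_mulHaar (by fun_prop)]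
    simp only [enorm_eq_self]

end PowerNorm

section DyadicDecomposition

variable {X : Type*} [MeasurableSpace X] {μ : Measure X} {f : X → ℝ} {t : ℝ}

lemma measure_rearr_lt_enorm_le : μ {x | rearr μ f t < ‖f x‖ₑ} ≤ ENNReal.ofReal t :=
  distribFn_eq_measure_enorm.symm.trans_le distribFn_rearr_le

lemma ae_exists_enorm_le_rearr : ∀ᵐ x ∂μ, ∃ s > 0, ‖f x‖ₑ ≤ rearr μ f s := by
  refine le_antisymm (ENNReal.le_of_forall_pos_le_add fun ε hε _ => ?_) zero_le
  have h_sub : {x | ∃ s > 0, ‖f x‖ₑ ≤ rearr μ f s}ᶜ ⊆ {x | rearr μ f ε < ‖f x‖ₑ} := by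
    intro x hx
    by_contra! h_le
    exact hx ⟨ε, hε, not_lt.1 h_le⟩
  calc μ {x | ∃ s > 0, ‖f x‖ₑ ≤ rearr μ f s}ᶜ ≤ ENNReal.ofReal ε :=
        (measure_mono h_sub).trans measure_rearr_lt_enorm_le
    _ = 0 + ε := by rw [ofReal_coe_nnreal, zero_add]

/-- The `k`-th dyadic layer of `f` relative to `t`: the set where `|f|` exceeds `f*(2 ^ k * t)`,
weighted by `f*(2 ^ (k - 1) * t)`, which bounds `|f|` off the preceding layer. -/
noncomputable def dyadicLayer (μ : Measure X) (f : X → ℝ) (t : ℝ) (k : ℤ) : X → ℝ≥0∞ :=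
  {x | rearr μ f (2 ^ k * t) < ‖f x‖ₑ}.indicator fun _ => rearr μ f (2 ^ (k - 1) * t)

lemma measurable_dyadicLayer (hf : Measurable f) (k : ℤ) : Measurable (dyadicLayer μ f t k) :=
  measurable_const.indicator (measurableSet_lt measurable_const hf.enorm)

lemma lintegral_mul_dyadicLayer (hf : Measurable f) {κ : X → ℝ≥0∞} (hκ : Measurable κ) (k : ℤ) :
    ∫⁻ x, κ x * dyadicLayer μ f t k x ∂μ =
      (∫⁻ x in {x | rearr μ f (2 ^ k * t) < ‖f x‖ₑ}, κ x ∂μ) * rearr μ f (2 ^ (k - 1) * t) := by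
  simp only [dyadicLayer, ← indicator_mul_right _ κ]
  rw [lintegral_indicator (measurableSet_lt measurable_const hf.enorm), lintegral_mul_const _ hκ]

lemma ae_enorm_le_tsum_dyadicLayer (ht : 0 < t)
    (hf : Filter.Tendsto (rearr μ f) Filter.atTop (nhds 0)) :
    ∀ᵐ x ∂μ, ‖f x‖ₑ ≤ ∑' k : ℤ, dyadicLayer μ f t k x := by
  filter_upwards [ae_exists_enorm_le_rearr (μ := μ) (f := f)] with x hx
  rcases eq_zero_or_pos ‖f x‖ₑ with h_zero | h_pos
  · simp [h_zero]
  obtain ⟨s, hs, hxs⟩ := hx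
  have h_bdd : ∃ b : ℤ, ∀ k : ℤ, rearr μ f (2 ^ k * t) < ‖f x‖ₑ → b ≤ k := by
    obtain ⟨b, hb, -⟩ := _root_.exists_mem_Ico_zpow (div_pos hs ht) _root_.one_lt_two
    refine ⟨b, fun k hk => ?_⟩
    by_contra! hkb
    have : (2 : ℝ) ^ k * t ≤ s := (le_div_iff₀ ht).1
      ((zpow_le_zpow_right₀ one_le_two hkb.le).trans hb)
    exact (hxs.trans (rearr_antitone this)).not_gt hk
  have h_exists : ∃ k : ℤ, rearr μ f (2 ^ k * t) < ‖f x‖ₑ := by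
    have h_tendsto : Filter.Tendsto (fun k : ℕ => (2 : ℝ) ^ k * t) Filter.atTop Filter.atTop :=
      (tendsto_pow_atTop_atTop_of_one_lt _root_.one_lt_two).atTop_mul_const ht
    obtain ⟨k, hk⟩ := ((hf.comp h_tendsto).eventually_lt_const h_pos).exists
    exact ⟨k, by simpa using hk⟩
  obtain ⟨k, hk, hk_least⟩ := Int.exists_least_of_bdd h_bdd h_exists
  have h_prev : ‖f x‖ₑ ≤ rearr μ f (2 ^ (k - 1) * t) :=
    not_lt.1 fun h => absurd (hk_least _ h) (by omega)
  calc ‖f x‖ₑ ≤ dyadicLayer μ f t k x := by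
        rwa [dyadicLayer, indicator_of_mem (show x ∈ {x | rearr μ f (2 ^ k * t) < ‖f x‖ₑ} from hk)]
    _ ≤ ∑' k : ℤ, dyadicLayer μ f t k x := ENNReal.le_tsum k

lemma lintegral_mul_enorm_le_tsum (hf : Measurable f)
    (hf_tendsto : Filter.Tendsto (rearr μ f) Filter.atTop (nhds 0)) (ht : 0 < t)
    {κ : X → ℝ≥0∞} (hκ : Measurable κ) :
    ∫⁻ x, κ x * ‖f x‖ₑ ∂μ ≤ ∑' k : ℤ,
      (∫⁻ x in {x | rearr μ f (2 ^ k * t) < ‖f x‖ₑ}, κ x ∂μ) * rearr μ f (2 ^ (k - 1) * t) := by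
  calc ∫⁻ x, κ x * ‖f x‖ₑ ∂μ ≤ ∫⁻ x, ∑' k : ℤ, κ x * dyadicLayer μ f t k x ∂μ :=
        lintegral_mono_ae <| (ae_enorm_le_tsum_dyadicLayer ht hf_tendsto).mono fun x hx => by
          rw [ENNReal.tsum_mul_left]; gcongr
    _ = ∑' k : ℤ, ∫⁻ x, κ x * dyadicLayer μ f t k x ∂μ :=
        lintegral_tsum fun k => (hκ.mul (measurable_dyadicLayer hf k)).aemeasurable
    _ = _ := by simp only [lintegral_mul_dyadicLayer hf hκ]

end DyadicDecomposition

section DyadicWeights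

variable {a θ : ℝ}

/-- The weight `min (2 ^ k) (2 ^ (k * θ))` with which the `k`-th dyadic layer contributes to
O'Neil's inequality for a kernel of order `θ`. -/
noncomputable def dyadicWeight (θ : ℝ) (k : ℤ) : ℝ≥0∞ :=
  min (2 ^ (k : ℝ)) (2 ^ (k * θ))

lemma ofReal_two_zpow_mul_rpow (k : ℤ) (t b : ℝ) :
    ENNReal.ofReal (2 ^ k * t) ^ b = 2 ^ (k * b) * ENNReal.ofReal t ^ b := by
  have h_two : ENNReal.ofReal (2 ^ k) = 2 ^ (k : ℝ) := by
    rw [← Real.rpow_intCast, ← ofReal_rpow_of_pos two_pos, ofReal_ofNat]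
  rw [ofReal_mul (by positivity), ENNReal.mul_rpow_of_ne_top ofReal_ne_top ofReal_ne_top, h_two,
    ← ENNReal.rpow_mul]

lemma ofReal_two_zpow_mul (k : ℤ) (t : ℝ) :
    ENNReal.ofReal (2 ^ k * t) = 2 ^ (k : ℝ) * ENNReal.ofReal t := by
  simpa using ofReal_two_zpow_mul_rpow k t 1

lemma dyadicWeight_ne_top (k : ℤ) : dyadicWeight θ k ≠ ∞ :=
  ((min_le_left _ _).trans_lt (rpow_ne_top_of_ne_zero two_ne_zero ofNat_ne_top).lt_top).ne

lemma dyadicWeight_natCast (hθ : θ ≤ 1) (n : ℕ) : dyadicWeight θ n = 2 ^ (((n : ℤ) : ℝ) * θ) :=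
  min_eq_right <| ENNReal.rpow_le_rpow_of_exponent_le one_le_two <|
    mul_le_of_le_one_right (by positivity) hθ

lemma dyadicWeight_neg_succ (hθ : θ ≤ 1) (n : ℕ) :
    dyadicWeight θ (-(n + 1)) = 2 ^ ((-(n + 1) : ℤ) : ℝ) :=
  min_eq_left <| ENNReal.rpow_le_rpow_of_exponent_le one_le_two <|
    le_mul_of_le_one_right (by push_cast; linarith [n.cast_nonneg (α := ℝ)]) hθ

lemma tsum_two_rpow_neg_mul_ne_top {δ : ℝ} (hδ : 0 < δ) :
    ∑' n : ℕ, (2 : ℝ≥0∞) ^ (-δ * n) ≠ ∞ := by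
  simp only [ENNReal.rpow_mul, ENNReal.rpow_natCast, ENNReal.tsum_geometric, ne_eq,
    ENNReal.inv_eq_top, tsub_eq_zero_iff_le, not_le]
  exact ENNReal.rpow_lt_one_of_one_lt_of_neg one_lt_two (neg_lt_zero.2 hδ)

lemma tsum_dyadicWeight_mul_ne_top (hθa : θ < a) (ha : a < 1) :
    ∑' k : ℤ, dyadicWeight θ k * 2 ^ (((k - 1 : ℤ) : ℝ) * -a) ≠ ∞ := by
  have h_mul (x y : ℝ) : (2 : ℝ≥0∞) ^ x * 2 ^ y = 2 ^ (x + y) :=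
    (ENNReal.rpow_add x y two_ne_zero ofNat_ne_top).symm
  have h_nonneg (n : ℕ) : dyadicWeight θ n * 2 ^ (((n - 1 : ℤ) : ℝ) * -a) =
      2 ^ a * 2 ^ (-(a - θ) * n) := by
    rw [dyadicWeight_natCast (hθa.trans ha).le, h_mul, h_mul]
    push_cast
    ring_nf
  have h_neg (n : ℕ) : dyadicWeight θ (-(n + 1)) * 2 ^ (((-(n + 1) - 1 : ℤ) : ℝ) * -a) =
      2 ^ (2 * a - 1) * 2 ^ (-(1 - a) * n) := by
    rw [dyadicWeight_neg_succ (hθa.trans ha).le, h_mul, h_mul]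
    push_cast
    ring_nf
  rw [tsum_of_nat_of_neg_add_one ENNReal.summable ENNReal.summable]
  simp only [h_nonneg, h_neg, ENNReal.tsum_mul_left]
  exact add_ne_top.2
    ⟨mul_ne_top (by simp) (tsum_two_rpow_neg_mul_ne_top (sub_pos.2 hθa)),
      mul_ne_top (by simp) (tsum_two_rpow_neg_mul_ne_top (sub_pos.2 ha))⟩

end DyadicWeights

/-- `F` belongs to the Marcinkiewicz space `L^{1/(1-θ),∞}` with norm at most `A`, the norm being
measured by integrals over sets: `∫_E F ≤ A t ^ θ` whenever `E` has measure at most `t`. -/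
def MarcinkiewiczBound {X : Type*} [MeasurableSpace X] (μ : Measure X) (θ : ℝ) (A : ℝ≥0∞)
    (F : X → ℝ≥0∞) : Prop :=
  ∀ ⦃t : ℝ⦄, 0 < t → ∀ ⦃E : Set X⦄, MeasurableSet E → μ E ≤ ENNReal.ofReal t →
    ∫⁻ x in E, F x ∂μ ≤ A * ENNReal.ofReal t ^ θ

section Marcinkiewicz

variable {X Y : Type*} [MeasurableSpace X] [MeasurableSpace Y] {μ : Measure X} {ν : Measure Y}
  {θ : ℝ} {A : ℝ≥0∞}

lemma rpow_eq_rpow_sub_one_mul {x : ℝ≥0∞} (hx : x ≠ 0) (hx_top : x ≠ ∞) (b : ℝ) :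
    x ^ b = x ^ (b - 1) * x := by
  conv_lhs => rw [← sub_add_cancel b 1, ENNReal.rpow_add _ _ hx hx_top, ENNReal.rpow_one]

lemma rpow_antitone_of_nonpos {b : ℝ} (hb : b ≤ 0) : Antitone fun x : ℝ≥0∞ => x ^ b := by
  intro x y hxy
  simpa only [ENNReal.rpow_neg, inv_inv] using
    ENNReal.inv_le_inv.2 (ENNReal.rpow_le_rpow hxy (neg_nonneg.2 hb))

lemma tendsto_zero_of_le_mul_rpow {φ : ℝ → ℝ≥0∞} {a : ℝ} {c : ℝ≥0∞} (ha : a < 0) (hc : c ≠ ∞)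
    (h : ∀ t, 0 < t → φ t ≤ c * ENNReal.ofReal t ^ a) :
    Filter.Tendsto φ Filter.atTop (nhds 0) := by
  have h_rpow : Filter.Tendsto (fun t => c * ENNReal.ofReal t ^ a) Filter.atTop (nhds 0) := by
    have h_comp := (ENNReal.continuous_rpow_const (y := a)).tendsto ∞ |>.comp
      ENNReal.tendsto_ofReal_atTop
    simpa [ENNReal.top_rpow_of_neg ha] using ENNReal.Tendsto.const_mul h_comp (.inr hc)
  exact tendsto_of_tendsto_of_tendsto_of_le_of_le' tendsto_const_nhds h_rpow
    (.of_forall fun _ => zero_le) ((Filter.eventually_gt_atTop 0).mono h)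

lemma marcinkiewiczBound_of_rearr_le {f : X → ℝ} (hf : Measurable f) (hA : A ≠ ∞) (hθ : θ < 1)
    (h : ∀ t, 0 < t → rearr μ f t ≤ A * ENNReal.ofReal t ^ (θ - 1)) :
    MarcinkiewiczBound μ θ
      (A * ∑' k : ℤ, dyadicWeight 0 k * 2 ^ (((k - 1 : ℤ) : ℝ) * -(1 - θ))) (‖f ·‖ₑ) := by
  intro t ht E hE hμE
  have h_term (k : ℤ) : (∫⁻ x in {x | rearr μ f (2 ^ k * t) < ‖f x‖ₑ}, E.indicator 1 x ∂μ) *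
      rearr μ f (2 ^ (k - 1) * t) ≤
      dyadicWeight 0 k * 2 ^ (((k - 1 : ℤ) : ℝ) * -(1 - θ)) * (A * ENNReal.ofReal t ^ θ) := by
    have h_measure : ∫⁻ x in {x | rearr μ f (2 ^ k * t) < ‖f x‖ₑ}, E.indicator 1 x ∂μ ≤
        dyadicWeight 0 k * ENNReal.ofReal t := by
      rw [lintegral_indicator_one hE, dyadicWeight, min_mul, mul_zero, ENNReal.rpow_zero, one_mul,
        ← ofReal_two_zpow_mul]
      refine le_min ?_ ((Measure.restrict_apply_le _ _).trans hμE)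
      rw [Measure.restrict_apply hE]
      exact (measure_mono inter_subset_right).trans measure_rearr_lt_enorm_le
    refine (mul_le_mul' h_measure (h _ (by positivity))).trans_eq ?_
    rw [ofReal_two_zpow_mul_rpow, rpow_eq_rpow_sub_one_mul (ofReal_pos.2 ht).ne' ofReal_ne_top θ,
      neg_sub]
    ring
  calc ∫⁻ x in E, ‖f x‖ₑ ∂μ = ∫⁻ x, E.indicator 1 x * ‖f x‖ₑ ∂μ := by
        rw [← lintegral_indicator hE]
        refine lintegral_congr fun x => ?_
        by_cases hx : x ∈ E <;> simp [hx]
    _ ≤ _ := lintegral_mul_enorm_le_tsum hf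
        (tendsto_zero_of_le_mul_rpow (sub_neg.2 hθ) hA h) ht (measurable_one.indicator hE)
    _ ≤ _ := ENNReal.tsum_le_tsum h_term
    _ = _ := by rw [ENNReal.tsum_mul_right]; ring

lemma MarcinkiewiczBound.lintegral_mul [SFinite μ] [SFinite ν] {K : X → Y → ℝ≥0∞}
    (hK : Measurable (Function.uncurry K)) (hK_bound : ∀ y, MarcinkiewiczBound μ θ A (K · y))
    {g : Y → ℝ≥0∞} (hg : Measurable g) :
    MarcinkiewiczBound μ θ (A * ∫⁻ y, g y ∂ν) fun x => ∫⁻ y, K x y * g y ∂ν := by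
  intro t ht E hE hμE
  calc ∫⁻ x in E, ∫⁻ y, K x y * g y ∂ν ∂μ
      = ∫⁻ y, ∫⁻ x in E, K x y * g y ∂μ ∂ν :=
        lintegral_lintegral_swap (hK.mul (hg.comp measurable_snd)).aemeasurable
    _ = ∫⁻ y, (∫⁻ x in E, K x y ∂μ) * g y ∂ν :=
        lintegral_congr fun y => lintegral_mul_const _ (hK.comp measurable_prodMk_right)
    _ ≤ ∫⁻ y, A * ENNReal.ofReal t ^ θ * g y ∂ν := by
        gcongr with y
        exact hK_bound y ht hE hμE
    _ = (A * ∫⁻ y, g y ∂ν) * ENNReal.ofReal t ^ θ := by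
        rw [lintegral_const_mul _ hg]; ring

lemma MarcinkiewiczBound.measure_lt_le [SigmaFinite μ] {F : X → ℝ≥0∞}
    (hF_bound : MarcinkiewiczBound μ θ A F) (hF : Measurable F) (hθ : θ ≤ 1) {t : ℝ} (ht : 0 < t) :
    μ {x | A * ENNReal.ofReal t ^ (θ - 1) < F x} ≤ ENNReal.ofReal t := by
  by_contra! h_lt
  obtain ⟨B, hB, hB_sub, hB_lt, hB_top⟩ :=
    Measure.exists_subset_measure_lt_top (measurableSet_lt measurable_const hF) h_lt
  have hB_pos : 0 < μ B := (ofReal_pos.2 ht).trans hB_lt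
  have h_integral := hF_bound (toReal_pos hB_pos.ne' hB_top.ne) hB (ofReal_toReal hB_top.ne).ge
  have h_const : A * ENNReal.ofReal t ^ (θ - 1) ≠ ∞ :=
    (lt_top_of_lt (hB_sub (nonempty_of_measure_ne_zero hB_pos.ne').some_mem)).ne
  refine lt_irrefl (∫⁻ x in B, F x ∂μ) ?_
  calc ∫⁻ x in B, F x ∂μ ≤ A * μ B ^ θ := by rwa [ofReal_toReal hB_top.ne] at h_integral
    _ = A * μ B ^ (θ - 1) * μ B := by
        rw [rpow_eq_rpow_sub_one_mul hB_pos.ne' hB_top.ne, mul_assoc]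
    _ ≤ A * ENNReal.ofReal t ^ (θ - 1) * μ B := by
        gcongr A * ?_ * _
        exact rpow_antitone_of_nonpos (sub_nonpos.2 hθ) hB_lt.le
    _ = ∫⁻ _ in B, A * ENNReal.ofReal t ^ (θ - 1) ∂μ := (setLIntegral_const _ _).symm
    _ < ∫⁻ x in B, F x ∂μ := setLIntegral_strict_mono hB hB_pos.ne' hF
        (by rw [setLIntegral_const]; exact mul_ne_top h_const hB_top.ne)
        (.of_forall fun x hx => hB_sub hx)

end Marcinkiewicz

section ONeil

variable {X Y : Type*} [MeasurableSpace X] [MeasurableSpace Y] {μ : Measure X} {ν : Measure Y}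
  {θ : ℝ} {A : ℝ≥0∞} {K : X → Y → ℝ≥0∞} {f : Y → ℝ} {h : X → ℝ} {t : ℝ}

lemma lintegral_dyadicLayer_le (hf : Measurable f) (k : ℤ) :
    ∫⁻ y, dyadicLayer ν f t k y ∂ν ≤
      ENNReal.ofReal t * (2 ^ (k : ℝ) * rearr ν f (2 ^ (k - 1) * t)) := by
  have h_layer := lintegral_mul_dyadicLayer (μ := ν) (t := t) hf measurable_one k
  simp only [Pi.one_apply, one_mul, setLIntegral_one] at h_layer
  calc ∫⁻ y, dyadicLayer ν f t k y ∂ν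
      ≤ ENNReal.ofReal (2 ^ k * t) * rearr ν f (2 ^ (k - 1) * t) :=
        h_layer.trans_le (mul_le_mul' measure_rearr_lt_enorm_le le_rfl)
    _ = _ := by rw [ofReal_two_zpow_mul]; ring

lemma MarcinkiewiczBound.lintegral_mul_dyadicLayer_le {κ : Y → ℝ≥0∞}
    (hκ_bound : MarcinkiewiczBound ν θ A κ) (hκ : Measurable κ) (hf : Measurable f) (ht : 0 < t)
    (k : ℤ) :
    ∫⁻ y, κ y * dyadicLayer ν f t k y ∂ν ≤
      A * ENNReal.ofReal t ^ θ * (2 ^ (k * θ) * rearr ν f (2 ^ (k - 1) * t)) := by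
  rw [lintegral_mul_dyadicLayer hf hκ]
  calc _ ≤ A * ENNReal.ofReal (2 ^ k * t) ^ θ * rearr ν f (2 ^ (k - 1) * t) := by
        gcongr
        exact hκ_bound (by positivity) (measurableSet_lt measurable_const hf.enorm)
          measure_rearr_lt_enorm_le
    _ = _ := by rw [ofReal_two_zpow_mul_rpow]; ring

lemma MarcinkiewiczBound.lintegral_mul_enorm_le {κ : Y → ℝ≥0∞}
    (hκ_bound : MarcinkiewiczBound ν θ A κ) (hκ : Measurable κ) (hf : Measurable f)
    (hf_tendsto : Filter.Tendsto (rearr ν f) Filter.atTop (nhds 0)) (hθ : θ ≤ 1) (ht : 0 < t) :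
    ∫⁻ y, κ y * ‖f y‖ₑ ∂ν ≤
      A * ENNReal.ofReal t ^ θ * (∑' n : ℕ, dyadicWeight θ n * rearr ν f (2 ^ ((n : ℤ) - 1) * t)) +
        ∫⁻ y, κ y * ∑' n : ℕ, dyadicLayer ν f t (-(n + 1)) y ∂ν := by
  have h_meas (k : ℤ) : Measurable fun y => κ y * dyadicLayer ν f t k y :=
    hκ.mul (measurable_dyadicLayer hf k)
  calc ∫⁻ y, κ y * ‖f y‖ₑ ∂ν
      ≤ ∫⁻ y, (∑' n : ℕ, κ y * dyadicLayer ν f t n y) +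
          κ y * ∑' n : ℕ, dyadicLayer ν f t (-(n + 1)) y ∂ν :=
        lintegral_mono_ae <| (ae_enorm_le_tsum_dyadicLayer ht hf_tendsto).mono fun y hy => by
          rw [tsum_of_nat_of_neg_add_one ENNReal.summable ENNReal.summable] at hy
          rw [ENNReal.tsum_mul_left, ← mul_add]
          gcongr
    _ = (∑' n : ℕ, ∫⁻ y, κ y * dyadicLayer ν f t n y ∂ν) +
          ∫⁻ y, κ y * ∑' n : ℕ, dyadicLayer ν f t (-(n + 1)) y ∂ν := by
        rw [lintegral_add_left (Measurable.tsum fun n : ℕ => h_meas n),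
          lintegral_tsum fun n : ℕ => (h_meas n).aemeasurable]
    _ ≤ _ := by
        rw [← ENNReal.tsum_mul_left]
        gcongr with n
        rw [dyadicWeight_natCast hθ]
        exact hκ_bound.lintegral_mul_dyadicLayer_le hκ hf ht n

lemma lintegral_tsum_dyadicLayer_neg_le (hf : Measurable f) (hθ : θ ≤ 1) :
    ∫⁻ y, ∑' n : ℕ, dyadicLayer ν f t (-(n + 1)) y ∂ν ≤ ENNReal.ofReal t *
      ∑' n : ℕ, dyadicWeight θ (-(n + 1)) * rearr ν f (2 ^ (-((n : ℤ) + 1) - 1) * t) := by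
  rw [lintegral_tsum fun n => (measurable_dyadicLayer hf _).aemeasurable, ← ENNReal.tsum_mul_left]
  gcongr with n
  rw [dyadicWeight_neg_succ hθ]
  exact lintegral_dyadicLayer_le hf _

/- The layers `k ≥ 0`, on which `f` is small, are bounded pointwise through the rows of the kernel;
the layers `k < 0` are integrable, and are bounded in weak type through its columns. -/
theorem rearr_le_of_enorm_le_lintegral_kernel [SigmaFinite μ] [SFinite ν]
    (hK : Measurable (Function.uncurry K)) (hK_row : ∀ x, MarcinkiewiczBound ν θ A (K x))
    (hK_col : ∀ y, MarcinkiewiczBound μ θ A (K · y)) (hθ : θ ≤ 1) (hf : Measurable f)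
    (hf_tendsto : Filter.Tendsto (rearr ν f) Filter.atTop (nhds 0))
    (hh : ∀ x, ‖h x‖ₑ ≤ ∫⁻ y, K x y * ‖f y‖ₑ ∂ν) (ht : 0 < t) :
    rearr μ h t ≤ A * ENNReal.ofReal t ^ θ *
      ∑' k : ℤ, dyadicWeight θ k * rearr ν f (2 ^ (k - 1) * t) := by
  set g : Y → ℝ≥0∞ := fun y => ∑' n : ℕ, dyadicLayer ν f t (-(n + 1)) y
  have hg : Measurable g := Measurable.tsum fun n => measurable_dyadicLayer hf _
  have hF : Measurable fun x => ∫⁻ y, K x y * g y ∂ν :=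
    (hK.mul (hg.comp measurable_snd)).lintegral_prod_right'
  have h_weak := (MarcinkiewiczBound.lintegral_mul hK hK_col hg).measure_lt_le hF hθ ht
  set S := ∑' n : ℕ, dyadicWeight θ n * rearr ν f (2 ^ ((n : ℤ) - 1) * t)
  have h_split : rearr μ h t ≤ A * ENNReal.ofReal t ^ θ * S +
      A * (∫⁻ y, g y ∂ν) * ENNReal.ofReal t ^ (θ - 1) := by
    rw [rearr_le_iff, distribFn_eq_measure_enorm]
    refine (measure_mono fun x hx => ?_).trans h_weak
    by_contra h_not_lt
    refine hx.not_ge ((hh x).trans (((hK_row x).lintegral_mul_enorm_le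
      (hK.comp measurable_prodMk_left) hf hf_tendsto hθ ht).trans ?_))
    gcongr
    exact not_lt.1 h_not_lt
  rw [tsum_of_nat_of_neg_add_one ENNReal.summable ENNReal.summable, mul_add]
  refine h_split.trans (add_le_add le_rfl ?_)
  calc A * (∫⁻ y, g y ∂ν) * ENNReal.ofReal t ^ (θ - 1)
      ≤ A * (ENNReal.ofReal t * ∑' n : ℕ, dyadicWeight θ (-(n + 1)) *
          rearr ν f (2 ^ (-((n : ℤ) + 1) - 1) * t)) * ENNReal.ofReal t ^ (θ - 1) := by
        gcongr
        exact lintegral_tsum_dyadicLayer_neg_le hf hθ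
    _ = _ := by
        rw [rpow_eq_rpow_sub_one_mul (ofReal_pos.2 ht).ne' ofReal_ne_top θ]
        ring

lemma tendsto_rearr_of_lorentz_ne_top {p q : ℝ≥0∞} (hp : 0 < p.toReal) (hq : 1 ≤ q)
    (hf : lorentz ν p q f ≠ ∞) : Filter.Tendsto (rearr ν f) Filter.atTop (nhds 0) := by
  rw [lorentz_eq_powerNorm (one_pos.trans_le hq).ne'] at hf
  refine tendsto_zero_of_le_mul_rpow (neg_lt_zero.2 (inv_pos.2 hp))
    (mul_ne_top (a := 2 ^ (p.toReal⁻¹ + 1)) (by simp) hf) fun s hs => ?_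
  rw [ENNReal.rpow_neg, ← div_eq_mul_inv, ENNReal.le_div_iff_mul_le (by simp [hs]) (by simp),
    mul_comm]
  exact rpow_mul_le_two_rpow_mul_powerNorm rearr_antitone (by positivity) hq hs

lemma powerNorm_tsum_dyadicWeight_mul_le {a b : ℝ} {q : ℝ≥0∞} {φ : ℝ → ℝ≥0∞} (hφ : Measurable φ)
    (hq : 1 ≤ q) :
    powerNorm a q (fun t => ∑' k : ℤ, dyadicWeight b k * φ (2 ^ (k - 1) * t)) ≤
      (∑' k : ℤ, dyadicWeight b k * 2 ^ (((k - 1 : ℤ) : ℝ) * -a)) * powerNorm a q φ := by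
  refine (powerNorm_tsum_le (fun k => by fun_prop) hq).trans ?_
  rw [← ENNReal.tsum_mul_right]
  gcongr with k
  have h_dilate := powerNorm_comp_const_mul_le (a := a) (q := q) hφ (c := 2 ^ (k - 1))
    (by positivity)
  have h_two := ofReal_two_zpow_mul_rpow (k - 1) 1 (-a)
  rw [mul_one, ofReal_one, ENNReal.one_rpow, mul_one] at h_two
  rw [h_two] at h_dilate
  refine (powerNorm_const_mul_le (dyadicWeight_ne_top k)).trans ?_
  rw [mul_assoc]
  exact mul_le_mul' le_rfl h_dilate

theorem exists_lorentz_le_of_enorm_le_lintegral_kernel [SigmaFinite μ] [SFinite ν]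
    (hK : Measurable (Function.uncurry K)) (hA : A ≠ ∞)
    (hK_row : ∀ x, MarcinkiewiczBound ν θ A (K x)) (hK_col : ∀ y, MarcinkiewiczBound μ θ A (K · y))
    {p q r : ℝ≥0∞} (hp : 1 < p.toReal) (hθ : θ < p.toReal⁻¹) (hr : r.toReal⁻¹ = p.toReal⁻¹ - θ)
    (hq : 1 ≤ q) :
    ∃ C ≠ ∞, ∀ (f : Y → ℝ) (h : X → ℝ), Measurable f →
      (∀ x, ‖h x‖ₑ ≤ ∫⁻ y, K x y * ‖f y‖ₑ ∂ν) → lorentz μ r q h ≤ C * lorentz ν p q f := by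
  have hp_inv : p.toReal⁻¹ < 1 := inv_lt_one_of_one_lt₀ hp
  set S := ∑' k : ℤ, dyadicWeight θ k * 2 ^ (((k - 1 : ℤ) : ℝ) * -p.toReal⁻¹)
  refine ⟨A * S + 1, add_ne_top.2
    ⟨mul_ne_top hA (tsum_dyadicWeight_mul_ne_top hθ hp_inv), one_ne_top⟩, fun f h hf hh => ?_⟩
  rcases eq_or_ne (lorentz ν p q f) ∞ with h_top | h_top
  · simp [h_top]
  have hf_tendsto := tendsto_rearr_of_lorentz_ne_top (one_pos.trans hp) hq h_top
  simp only [lorentz_eq_powerNorm (one_pos.trans_le hq).ne', hr]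
  calc powerNorm (p.toReal⁻¹ - θ) q (rearr μ h)
      ≤ A * powerNorm (p.toReal⁻¹ - θ + θ) q
          (fun t => ∑' k : ℤ, dyadicWeight θ k * rearr ν f (2 ^ (k - 1) * t)) :=
        powerNorm_le_of_le_mul_rpow hA fun t ht => rearr_le_of_enorm_le_lintegral_kernel
          hK hK_row hK_col (hθ.trans hp_inv).le hf hf_tendsto hh ht
    _ ≤ A * (S * powerNorm p.toReal⁻¹ q (rearr ν f)) := by
        rw [sub_add_cancel]
        gcongr
        exact powerNorm_tsum_dyadicWeight_mul_le rearr_antitone.measurable hq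
    _ ≤ (A * S + 1) * powerNorm p.toReal⁻¹ q (rearr ν f) := by
        rw [← mul_assoc]
        gcongr
        exact le_self_add

end ONeil

section LorentzProduct

variable {X : Type*} [MeasurableSpace X] {μ : Measure X} {f g w : X → ℝ} {p q q₂ q₃ r : ℝ≥0∞}

lemma lorentz_mono_ae (hq : q ≠ 0) (h : ∀ᵐ x ∂μ, ‖f x‖ₑ ≤ ‖g x‖ₑ) :
    lorentz μ p q f ≤ lorentz μ p q g := by
  rw [lorentz_eq_powerNorm hq, lorentz_eq_powerNorm hq]
  exact eLpNorm_mono_enorm fun t => mul_le_mul' le_rfl (rearr_mono_ae h)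

lemma lorentz_mono_exponent (hq₂ : 1 ≤ q₂) (hq : q₂ ≤ q₃) :
    lorentz μ p q₃ f ≤ 2 ^ (p.toReal⁻¹ + 1) * lorentz μ p q₂ f := by
  have hq₂_pos : 0 < q₂ := one_pos.trans_le hq₂
  rw [lorentz_eq_powerNorm hq₂_pos.ne', lorentz_eq_powerNorm (hq₂_pos.trans_le hq).ne']
  exact powerNorm_mono_exponent rearr_antitone (by positivity) hq₂ hq

lemma lorentz_mul_le_of_rearr_le {κ : ℝ} {c : ℝ≥0∞} (hc : c ≠ ∞)
    (hw : ∀ t, 0 < t → rearr μ w t ≤ c * ENNReal.ofReal t ^ (-κ))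
    (hr : r.toReal⁻¹ = p.toReal⁻¹ + κ) (hq : q ≠ 0) :
    lorentz μ r q (fun x => w x * g x) ≤
      ENNReal.ofReal 2⁻¹ ^ (-r.toReal⁻¹) * c * lorentz μ p q g := by
  set φ : ℝ → ℝ≥0∞ := fun t => c * ENNReal.ofReal t ^ (-κ) * rearr μ g t
  have hφ : Measurable φ := by
    have := rearr_antitone (μ := μ) (f := g) |>.measurable
    fun_prop
  have h_half (t : ℝ) (ht : 0 < t) : rearr μ (fun x => w x * g x) t ≤ φ (2⁻¹ * t) := by
    have h_mul := rearr_mul_le (μ := μ) (f := w) (g := g) (half_pos ht).le (half_pos ht).le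
    rw [add_halves, ← inv_mul_eq_div] at h_mul
    exact h_mul.trans (mul_le_mul' (hw _ (by positivity)) le_rfl)
  rw [lorentz_eq_powerNorm hq, lorentz_eq_powerNorm hq]
  calc powerNorm r.toReal⁻¹ q (rearr μ fun x => w x * g x)
      ≤ powerNorm r.toReal⁻¹ q fun t => φ (2⁻¹ * t) := by
        simpa using powerNorm_le_of_le_mul_rpow (a := r.toReal⁻¹) (b := 0) (q := q) one_ne_top
          (by simpa using h_half)
    _ ≤ ENNReal.ofReal 2⁻¹ ^ (-r.toReal⁻¹) * powerNorm r.toReal⁻¹ q φ :=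
        powerNorm_comp_const_mul_le hφ (by positivity)
    _ ≤ ENNReal.ofReal 2⁻¹ ^ (-r.toReal⁻¹) * (c * powerNorm (r.toReal⁻¹ + -κ) q (rearr μ g)) := by
        gcongr
        exact powerNorm_le_of_le_mul_rpow hc fun _ _ => le_rfl
    _ = _ := by rw [hr, add_neg_cancel_right, mul_assoc]

end LorentzProduct

section NormPower

open Module (finrank)

variable {E : Type*} [NormedAddCommGroup E] [NormedSpace ℝ E] [FiniteDimensional ℝ E]
  [MeasurableSpace E] [BorelSpace E] (μ : Measure E) [μ.IsAddHaarMeasure] {α β γ σ : ℝ}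
  {q : ℝ≥0∞}

lemma exists_rearr_norm_rpow_neg_le [Nontrivial E] (hβ : 0 ≤ β) :
    ∃ c ≠ ∞, ∀ t, 0 < t →
      rearr μ (fun x => ‖x‖ ^ (-β)) t ≤ c * ENNReal.ofReal t ^ (-(β / finrank ℝ E)) := by
  have hd : (0 : ℝ) < finrank ℝ E := Nat.cast_pos.2 Module.finrank_pos
  have h_top : μ (Metric.ball 0 1) ≠ ∞ := measure_ball_lt_top.ne
  set ω := (μ (Metric.ball 0 1)).toReal
  have hω : 0 < ω := toReal_pos (Metric.measure_ball_pos μ 0 one_pos).ne' h_top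
  refine ⟨ENNReal.ofReal (ω ^ (β / finrank ℝ E)), ofReal_ne_top, fun t ht => ?_⟩
  set R := (t / ω) ^ (finrank ℝ E : ℝ)⁻¹
  have hR : 0 < R := by positivity
  have hR_measure : μ (Metric.closedBall 0 R) = ENNReal.ofReal t := by
    rw [Measure.addHaar_closedBall μ 0 hR.le, ← ofReal_toReal h_top, ← ofReal_mul (by positivity),
      ← Real.rpow_natCast, Real.rpow_inv_rpow (by positivity) hd.ne', div_mul_cancel₀ _ hω.ne']
  have hR_rpow : R ^ (-β) = ω ^ (β / finrank ℝ E) * t ^ (-(β / finrank ℝ E)) := by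
    rw [← Real.rpow_mul (by positivity), Real.div_rpow ht.le hω.le, inv_mul_eq_div, neg_div,
      Real.rpow_neg hω.le, div_inv_eq_mul, mul_comm]
  rw [ofReal_rpow_of_pos ht, ← ofReal_mul (by positivity), ← hR_rpow, rearr_le_iff, distribFn,
    ← hR_measure]
  refine measure_mono fun x hx => ?_
  by_contra hxR
  rw [mem_closedBall_zero_iff, not_le] at hxR
  refine hx.not_ge (ofReal_le_ofReal ?_)
  rw [abs_of_nonneg (by positivity)]
  exact Real.rpow_le_rpow_of_nonpos hR hxR.le (neg_nonpos.2 hβ)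

lemma exists_lorentz_norm_rpow_neg_mul_le [Nontrivial E] (hβ : 0 ≤ β) {p r : ℝ≥0∞}
    (hr : r.toReal⁻¹ = p.toReal⁻¹ + β / finrank ℝ E) (hq : q ≠ 0) :
    ∃ C ≠ ∞, ∀ g : E → ℝ, lorentz μ r q (fun x => ‖x‖ ^ (-β) * g x) ≤ C * lorentz μ p q g := by
  obtain ⟨c, hc, h_rearr⟩ := exists_rearr_norm_rpow_neg_le μ hβ
  exact ⟨_, mul_ne_top (by simp) hc, fun g => lorentz_mul_le_of_rearr_le hc h_rearr hr hq⟩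

/-- The (unnormalised) Riesz potential of order `γ`, convolution with `‖y‖ ^ (γ - d)` where
`d = dim E`; its value is `0` wherever the convolution integral diverges. -/
noncomputable def rieszPotential (γ : ℝ) (f : E → ℝ) (x : E) : ℝ :=
  ∫ y, ‖y‖ ^ (γ - finrank ℝ E) * f (x - y) ∂μ

lemma enorm_rieszPotential_le (f : E → ℝ) (x : E) :
    ‖rieszPotential μ γ f x‖ₑ ≤ ∫⁻ y, ‖‖x - y‖ ^ (γ - finrank ℝ E)‖ₑ * ‖f y‖ₑ ∂μ := by
  calc ‖rieszPotential μ γ f x‖ₑ ≤ ∫⁻ y, ‖‖y‖ ^ (γ - finrank ℝ E)‖ₑ * ‖f (x - y)‖ₑ ∂μ := by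
        simpa only [rieszPotential, enorm_mul] using enorm_integral_le_lintegral_enorm
          (μ := μ) fun y => ‖y‖ ^ (γ - finrank ℝ E) * f (x - y)
    _ = ∫⁻ y, ‖‖x - y‖ ^ (γ - finrank ℝ E)‖ₑ * ‖f y‖ₑ ∂μ := by
        rw [← lintegral_sub_left_eq_self _ x]
        simp only [_root_.sub_sub_cancel]

lemma exists_marcinkiewiczBound_rieszKernel [Nontrivial E] (hγ : 0 < γ) (hγd : γ < finrank ℝ E) :
    ∃ A ≠ ∞, ∀ φ : E → E, MeasurePreserving φ μ μ →
      MarcinkiewiczBound μ (γ / finrank ℝ E) A (fun x => ‖‖φ x‖ ^ (γ - finrank ℝ E)‖ₑ) := by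
  have hd : (0 : ℝ) < finrank ℝ E := hγ.trans hγd
  obtain ⟨c, hc, h_rearr⟩ := exists_rearr_norm_rpow_neg_le μ (sub_nonneg.2 hγd.le)
  have hθ : 0 < γ / finrank ℝ E := div_pos hγ hd
  have hθ1 : γ / finrank ℝ E < 1 := (div_lt_one hd).2 hγd
  have h_exponent : -((finrank ℝ E - γ) / finrank ℝ E) = γ / finrank ℝ E - 1 := by
    field_simp
    ring
  simp only [neg_sub, h_exponent] at h_rearr
  have h_meas : Measurable fun x : E => ‖x‖ ^ (γ - finrank ℝ E) := by fun_prop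
  refine ⟨_, mul_ne_top hc (tsum_dyadicWeight_mul_ne_top (sub_pos.2 hθ1) (sub_lt_self 1 hθ)),
    fun φ hφ => marcinkiewiczBound_of_rearr_le (h_meas.comp hφ.measurable) hc hθ1 fun t ht => ?_⟩
  exact (congrFun (rearr_comp_measurePreserving hφ h_meas) t).trans_le (h_rearr t ht)

lemma exists_lorentz_rieszPotential_le [Nontrivial E] {p r : ℝ≥0∞} (hγ : 0 < γ)
    (hp : 1 < p.toReal) (hγp : γ / finrank ℝ E < p.toReal⁻¹)
    (hr : r.toReal⁻¹ = p.toReal⁻¹ - γ / finrank ℝ E) (hq : 1 ≤ q) :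
    ∃ C ≠ ∞, ∀ f : E → ℝ, Measurable f →
      lorentz μ r q (rieszPotential μ γ f) ≤ C * lorentz μ p q f := by
  have hγd : γ < finrank ℝ E :=
    (div_lt_one (Nat.cast_pos.2 Module.finrank_pos)).1 (hγp.trans (inv_lt_one_of_one_lt₀ hp))
  obtain ⟨A, hA, h_bound⟩ := exists_marcinkiewiczBound_rieszKernel μ hγ hγd
  obtain ⟨C, hC, h_lorentz⟩ := exists_lorentz_le_of_enorm_le_lintegral_kernel
    (K := fun x y : E => ‖‖x - y‖ ^ (γ - finrank ℝ E)‖ₑ) (by fun_prop) hA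
    (fun x => h_bound _ (Measure.measurePreserving_sub_left μ x))
    (fun y => h_bound _ (measurePreserving_sub_right μ y)) hp hγp hr hq
  exact ⟨C, hC, fun f hf => h_lorentz f _ hf (enorm_rieszPotential_le μ f)⟩

lemma exists_lorentz_le_lorentz_norm_rpow_mul [Nontrivial E] (hα : 0 ≤ α) {p r : ℝ≥0∞}
    (hr : r.toReal⁻¹ = p.toReal⁻¹ + α / finrank ℝ E) (hq : q ≠ 0) :
    ∃ C ≠ ∞, ∀ f : E → ℝ, lorentz μ r q f ≤ C * lorentz μ p q (fun x => ‖x‖ ^ α * f x) := by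
  obtain ⟨C, hC, h_mul⟩ := exists_lorentz_norm_rpow_neg_mul_le μ hα hr hq
  refine ⟨C, hC, fun f => (lorentz_mono_ae hq ?_).trans (h_mul _)⟩
  filter_upwards [Measure.ae_ne μ 0] with x hx
  rw [← mul_assoc, ← Real.rpow_add (norm_pos_iff.2 hx), neg_add_cancel, Real.rpow_zero, one_mul]


/- The three factors of `x ↦ ‖x‖ ^ (-σ) * T (‖·‖ ^ (-α) * g)` shift the reciprocal of the first
Lorentz exponent by `α / d`, `-γ / d` and `σ / d` in turn. -/
theorem exists_lorentz_norm_rpow_neg_mul_rieszPotential_le [Nontrivial E] {p s : ℝ≥0∞}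
    (hγ : 0 < γ) (hα : 0 ≤ α) (hσ : 0 ≤ σ) (hα_lt : p.toReal⁻¹ + α / finrank ℝ E < 1)
    (hσ_lt : σ / finrank ℝ E < s.toReal⁻¹)
    (hbal : s.toReal⁻¹ = p.toReal⁻¹ + α / finrank ℝ E - γ / finrank ℝ E + σ / finrank ℝ E)
    (hq : 1 ≤ q) :
    ∃ C ≠ ∞, ∀ f : E → ℝ, Measurable f →
      lorentz μ s q (fun x => ‖x‖ ^ (-σ) * rieszPotential μ γ f x) ≤
        C * lorentz μ p q (fun x => ‖x‖ ^ α * f x) := by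
  have hq_ne : q ≠ 0 := (one_pos.trans_le hq).ne'
  have hd : (0 : ℝ) < finrank ℝ E := Nat.cast_pos.2 Module.finrank_pos
  have hγ_div : 0 < γ / finrank ℝ E := div_pos hγ hd
  obtain ⟨p₁, hp₁⟩ : ∃ p₁ : ℝ≥0∞, p₁.toReal⁻¹ = p.toReal⁻¹ + α / finrank ℝ E :=
    ⟨ENNReal.ofReal (p.toReal⁻¹ + α / finrank ℝ E)⁻¹, by
      rw [toReal_ofReal (by positivity), inv_inv]⟩
  obtain ⟨p₂, hp₂⟩ : ∃ p₂ : ℝ≥0∞, p₂.toReal⁻¹ = p₁.toReal⁻¹ - γ / finrank ℝ E :=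
    ⟨ENNReal.ofReal (p₁.toReal⁻¹ - γ / finrank ℝ E)⁻¹, by
      rw [toReal_ofReal (inv_nonneg.2 (by linarith)), inv_inv]⟩
  have hp₁_pos : 0 < p₁.toReal := inv_pos.1 (by linarith)
  have hp₁_gt : 1 < p₁.toReal := (inv_lt_one₀ hp₁_pos).1 (hp₁.trans_lt hα_lt)
  obtain ⟨C₁, hC₁, h_unweight⟩ := exists_lorentz_le_lorentz_norm_rpow_mul μ hα hp₁ hq_ne
  obtain ⟨C₂, hC₂, h_riesz⟩ :=
    exists_lorentz_rieszPotential_le μ hγ hp₁_gt (by linarith) hp₂ hq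
  obtain ⟨C₃, hC₃, h_weight⟩ := exists_lorentz_norm_rpow_neg_mul_le μ hσ
    (p := p₂) (r := s) (by linarith) hq_ne
  refine ⟨C₃ * (C₂ * C₁), mul_ne_top hC₃ (mul_ne_top hC₂ hC₁), fun f hf => ?_⟩
  calc lorentz μ s q (fun x => ‖x‖ ^ (-σ) * rieszPotential μ γ f x)
      ≤ C₃ * lorentz μ p₂ q (rieszPotential μ γ f) := h_weight _
    _ ≤ C₃ * (C₂ * lorentz μ p₁ q f) := by gcongr; exact h_riesz f hf
    _ ≤ C₃ * (C₂ * (C₁ * lorentz μ p q fun x => ‖x‖ ^ α * f x)) := by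
        gcongr; exact h_unweight f
    _ = C₃ * (C₂ * C₁) * lorentz μ p q fun x => ‖x‖ ^ α * f x := by ring

theorem stmt_16_general {p s : ℝ} (hp : 1 < p) (hγ : 0 < γ) (hα : 0 ≤ α) (hσ : 0 ≤ σ)
    (hα_lt : α < finrank ℝ E / (p / (p - 1))) (hσ_lt : σ < finrank ℝ E / s)
    (hbal : α + σ - γ = finrank ℝ E / s - finrank ℝ E / p) {q₂ q₃ : ℝ≥0∞} (hq₂ : 1 ≤ q₂)
    (hq₂₃ : q₂ ≤ q₃) :
    ∃ C : ℝ, 0 < C ∧ ∀ f : E → ℝ, Measurable f →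
      lorentz μ (ENNReal.ofReal s) q₃ (fun x => ‖x‖ ^ (-σ) * rieszPotential μ γ f x) ≤
        ENNReal.ofReal C * lorentz μ (ENNReal.ofReal p) q₂ (fun x => ‖x‖ ^ α * f x) := by
  have h_conj : 0 < p / (p - 1) := div_pos (one_pos.trans hp) (sub_pos.2 hp)
  have hd : (0 : ℝ) < finrank ℝ E := (div_pos_iff_of_pos_right h_conj).1 (hα.trans_lt hα_lt)
  have hs : 0 < s := (div_pos_iff_of_pos_left hd).1 (hσ.trans_lt hσ_lt)
  have : Nontrivial E := Module.finrank_pos_iff.1 (Nat.cast_pos.1 hd)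
  have hp_toReal : (ENNReal.ofReal p).toReal = p := toReal_ofReal (by positivity)
  have hs_toReal : (ENNReal.ofReal s).toReal = s := toReal_ofReal hs.le
  have hα_div : p⁻¹ + α / finrank ℝ E < 1 := by
    have h_conj_inv : (p / (p - 1))⁻¹ = 1 - p⁻¹ := by
      rw [inv_div, sub_div, div_self (by positivity), one_div]
    rwa [← lt_sub_iff_add_lt', div_lt_iff₀ hd, ← h_conj_inv, inv_mul_eq_div]
  have hσ_div : σ / finrank ℝ E < s⁻¹ := by rwa [div_lt_iff₀ hd, inv_mul_eq_div]
  have hbal_div : s⁻¹ = p⁻¹ + α / finrank ℝ E - γ / finrank ℝ E + σ / finrank ℝ E := by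
    field_simp at hbal ⊢
    linarith
  obtain ⟨C, hC, h_lorentz⟩ := exists_lorentz_norm_rpow_neg_mul_rieszPotential_le μ
    (p := ENNReal.ofReal p) (s := ENNReal.ofReal s) hγ hα hσ (by rwa [hp_toReal])
    (by rwa [hs_toReal]) (by rwa [hp_toReal, hs_toReal]) hq₂
  set D := 2 ^ ((ENNReal.ofReal s).toReal⁻¹ + 1) * C
  have hD : D ≤ ENNReal.ofReal (D.toReal + 1) := by
    rw [le_ofReal_iff_toReal_le (mul_ne_top (by simp) hC) (by positivity)]
    linarith
  refine ⟨D.toReal + 1, by positivity, fun f hf => ?_⟩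
  calc lorentz μ (ENNReal.ofReal s) q₃ (fun x => ‖x‖ ^ (-σ) * rieszPotential μ γ f x)
      ≤ D * lorentz μ (ENNReal.ofReal p) q₂ (fun x => ‖x‖ ^ α * f x) := by
        rw [mul_assoc]
        exact (lorentz_mono_exponent hq₂ hq₂₃).trans (mul_le_mul' le_rfl (h_lorentz f hf))
    _ ≤ _ := by gcongr

end NormPower

/-- Corollary 5.4 of the paper in the Euclidean case: the Stein–Weiss type weighted
Lorentz estimate `‖|x|^{-σ} T f‖_{s,q₃} ≤ C ‖|x|^α f‖_{p,q₂}`. -/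
theorem stmt_16 (n : ℕ) (hn : 2 ≤ n) (p s α σ : ℝ)
    (hp : 1 < p) (hps : p ≤ s) (hα : 0 < α) (hσ0 : 0 < σ)
    (hα1 : 1 - (n : ℝ) / p < α) (hα2 : α < (n : ℝ) / (p / (p - 1)))
    (hσ : σ < (n : ℝ) / s)
    (hbal : α + σ - 1 = (n : ℝ) / s - (n : ℝ) / p)
    (q₂ q₃ : ℝ≥0∞) (hq₂ : 1 ≤ q₂) (hq₂₃ : q₂ ≤ q₃) :
    ∃ C : ℝ, 0 < C ∧ ∀ f : EuclideanSpace ℝ (Fin n) → ℝ, Measurable f →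
      lorentz volume (ENNReal.ofReal s) q₃ (fun x => ‖x‖ ^ (-σ) * potl n f x) ≤
        ENNReal.ofReal C *
          lorentz volume (ENNReal.ofReal p) q₂ (fun x => ‖x‖ ^ α * f x) := by
  have h_dim : (Module.finrank ℝ (EuclideanSpace ℝ (Fin n)) : ℝ) = n := by
    rw [finrank_euclideanSpace_fin]
  have h_potl (f : EuclideanSpace ℝ (Fin n) → ℝ) : potl n f = rieszPotential volume 1 f := by
    funext x
    rw [potl, rieszPotential, h_dim]
  simp only [h_potl]
  exact stmt_16_general volume hp one_pos hα.le hσ0.le (h_dim.symm ▸ hα2) (h_dim.symm ▸ hσ)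
    (h_dim.symm ▸ hbal) hq₂ hq₂₃
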